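/- arXiv:1904.09283 — 3 statements merged into one kernel-verified Lean document; each statement's English description precedes it below -/
import Mathlib

section
/- For all natural numbers d and r with r ≥ 4, setting k = ⌊r/2⌋, one has ⌈d/k⌉ + k ≤ (5/2)·(⌈d/r⌉ + r) (as an inequality of real numbers). -/
/-- For all natural numbers `d` and `r` with `r ≥ 4`, setting `k = ⌊r/2⌋`, one has
`⌈d/k⌉ + k ≤ (5/2)·(⌈d/r⌉ + r)` as an inequality of real numbers, where `⌈·⌉` is
ceiling division. -/
theorem kway_halving_bound (d r : ℕ) (hr : 4 ≤ r) :
    ((⌈(d : ℝ) / (r / 2 : ℕ)⌉₊ + (r / 2 : ℕ) : ℕ) : ℝ) ≤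
      (5 / 2) * ((⌈(d : ℝ) / r⌉₊ + r : ℕ) : ℝ) := by
  obtain ⟨k, hk⟩ : ∃ k, k = r / 2 := ⟨_, rfl⟩
  rw [← hk]
  have hk2 : (2 : ℝ) ≤ k := by exact_mod_cast (by omega : 2 ≤ k)
  have hr1 : (r : ℝ) ≤ 2 * k + 1 := by exact_mod_cast (by omega : r ≤ 2 * k + 1)
  have hr2 : 2 * (k : ℝ) ≤ r := by exact_mod_cast (by omega : 2 * k ≤ r)
  have hrpos : (0 : ℝ) < r := by linarith
  have hkpos : (0 : ℝ) < k := by linarith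
  have hc := Nat.le_ceil ((d : ℝ) / r)
  rw [div_le_iff₀ hrpos] at hc
  have hc0 : (0 : ℝ) ≤ (⌈(d : ℝ) / r⌉₊ : ℝ) := Nat.cast_nonneg _
  have h1 : (d : ℝ) / k ≤ 5 / 2 * (⌈(d : ℝ) / r⌉₊ : ℝ) := by
    rw [div_le_iff₀ hkpos]
    have h := mul_le_mul_of_nonneg_left (by linarith : (r : ℝ) ≤ 5 / 2 * k) hc0
    linarith
  have h2 := Nat.ceil_lt_add_one (by positivity : (0 : ℝ) ≤ (d : ℝ) / k)
  push_cast
  linarith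
end

section
/- Let x ≥ 2 and i ≥ 1 be integers such that (i + 1 : ℝ) ≤ log₂ x − log₂ log₂ e. For each integer j ≥ 1, set t_j = ⌈x/2^j⌉ + j + 1 (a natural number, with ⌈·⌉ ceiling division). Then, as real numbers, t_i/(2^(i−2)·x) + Σ_{j=1}^{i+1} t_i/(2^(i−j−1)·t_j) < 14, where 2^(i−2) and 2^(i−j−1) denote real powers of 2 with (possibly negative) integer exponents. -/
open Real Finset

lemma bs_ceil_le (x j : ℕ) : ⌈(x : ℝ) / 2 ^ j⌉₊ ≤ 2 * ⌈(x : ℝ) / 2 ^ (j + 1)⌉₊ := by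
  apply Nat.ceil_le.2
  have h := Nat.le_ceil ((x : ℝ) / 2 ^ (j + 1))
  have e : (x : ℝ) / 2 ^ j = 2 * ((x : ℝ) / 2 ^ (j + 1)) := by
    rw [pow_succ]; field_simp
  push_cast
  linarith

lemma bs_ceil_half (x j : ℕ) :
    ⌈(x : ℝ) / 2 ^ (j + 1)⌉₊ ≤ (⌈(x : ℝ) / 2 ^ j⌉₊ + 1) / 2 := by
  apply Nat.ceil_le.2
  have h := Nat.le_ceil ((x : ℝ) / 2 ^ j)
  have e : (x : ℝ) / 2 ^ j = 2 * ((x : ℝ) / 2 ^ (j + 1)) := by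
    rw [pow_succ]; field_simp
  have h2 : ⌈(x : ℝ) / 2 ^ j⌉₊ ≤ 2 * ((⌈(x : ℝ) / 2 ^ j⌉₊ + 1) / 2) := by omega
  have h3 : ((⌈(x : ℝ) / 2 ^ j⌉₊ : ℕ) : ℝ)
      ≤ 2 * (((⌈(x : ℝ) / 2 ^ j⌉₊ + 1) / 2 : ℕ) : ℝ) := by exact_mod_cast h2
  linarith

lemma bs_pow_le (x i : ℕ) (hx : 2 ≤ x)
    (hik : ((i : ℝ) + 1) ≤ logb 2 x - logb 2 (logb 2 (exp 1))) : 2 ^ (i + 1) ≤ x := by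
  have he : (2 : ℝ) ≤ exp 1 := by have := Real.add_one_le_exp (1 : ℝ); linarith
  have h1 : 1 ≤ logb 2 (exp 1) := by
    rw [Real.le_logb_iff_rpow_le (by norm_num) (by positivity)]; simpa using he
  have h2 : 0 ≤ logb 2 (logb 2 (exp 1)) := Real.logb_nonneg (by norm_num) h1
  have hx0 : (0 : ℝ) < x := by exact_mod_cast (by omega : 0 < x)
  have h3 : ((i + 1 : ℕ) : ℝ) ≤ logb 2 x := by push_cast; linarith
  rw [Real.le_logb_iff_rpow_le (by norm_num) hx0, Real.rpow_natCast] at h3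
  exact_mod_cast h3

lemma bs_geom (i : ℕ) :
    ∑ j ∈ Finset.Icc 1 i, (2 : ℝ) ^ (j : ℕ) = 2 * 2 ^ i - 2 := by
  induction i with
  | zero => simp
  | succ n ih => rw [Finset.sum_Icc_succ_top (by omega), ih]; ring

/-- Let `x ≥ 2` and `i ≥ 1` be integers with `(i+1 : ℝ) ≤ log₂ x − log₂ log₂ e`, and let
`t j = ⌈x/2^j⌉ + j + 1` for `j ≥ 1`.  Then
`t i/(2^(i−2)·x) + Σ_{j=1}^{i+1} t i/(2^(i−j−1)·t j) < 14` (real powers of `2` with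
possibly negative integer exponents). -/
theorem binary_split_sum_lt_14 (x i : ℕ) (hx : 2 ≤ x) (hi : 1 ≤ i)
    (hik : ((i : ℝ) + 1) ≤ logb 2 x - logb 2 (logb 2 (exp 1)))
    (t : ℕ → ℕ) (ht : ∀ j, 1 ≤ j → t j = ⌈(x : ℝ) / 2 ^ j⌉₊ + j + 1) :
    (t i : ℝ) / ((2 : ℝ) ^ ((i : ℤ) - 2) * x) +
      ∑ j ∈ Finset.Icc 1 (i + 1),
        (t i : ℝ) / ((2 : ℝ) ^ ((i : ℤ) - (j : ℤ) - 1) * (t j : ℝ)) < 14 := by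
  have hp := bs_pow_le x i hx hik
  have hx4 : 4 ≤ x := le_trans
    (by simpa using Nat.pow_le_pow_right (n := 2) (by norm_num) (by omega : 2 ≤ i + 1)) hp
  have hxR : (4 : ℝ) ≤ x := by exact_mod_cast hx4
  have hpos : ∀ j, 1 ≤ j → (0 : ℝ) < t j := fun j hj => by
    have := ht j hj
    exact_mod_cast (by omega : 0 < t j)
  -- consecutive durations
  have hstep : ∀ j, 1 ≤ j → j ≤ i → t (j + 1) ≤ t j := by
    intro j hj hji
    rw [ht j hj, ht (j + 1) (by omega)]
    have h1 := bs_ceil_half x j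
    have h2 : 1 < ⌈(x : ℝ) / 2 ^ j⌉₊ := by
      rw [Nat.lt_ceil, lt_div_iff₀ (by positivity)]
      have h3 : 2 ^ j < x := lt_of_lt_of_le
        (Nat.pow_lt_pow_right (by norm_num) (by omega : j < i + 1)) hp
      have h4 : (2 : ℝ) ^ j < x := by exact_mod_cast h3
      simpa using h4
    omega
  have hmono : ∀ j, 1 ≤ j → j ≤ i → t i ≤ t j := by
    intro j hj hji
    have key : ∀ m, j ≤ m → m ≤ i → t m ≤ t j := by
      intro m hm
      induction m, hm using Nat.le_induction with
      | base => intro _; exact le_rfl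
      | succ m hm ih =>
        intro h
        exact (hstep m (by omega) (by omega)).trans (ih (by omega))
    exact key i hji le_rfl
  have hlast : (t i : ℝ) ≤ 2 * t (i + 1) := by
    have h : t i ≤ 2 * t (i + 1) := by
      have := bs_ceil_le x i
      rw [ht i hi, ht (i + 1) (by omega)]
      omega
    exact_mod_cast h
  have htx : (t i : ℝ) < 2 * x := by
    have h1 := hmono 1 le_rfl hi
    have h2 := ht 1 le_rfl
    have h3 : ⌈(x : ℝ) / 2 ^ 1⌉₊ ≤ x := by
      apply Nat.ceil_le.2
      linarith
    exact_mod_cast (by omega : t i < 2 * x)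
  have hP : (2 : ℝ) ≤ 2 ^ i := by
    simpa using pow_le_pow_right₀ (by norm_num : (1 : ℝ) ≤ 2) hi
  have hP0 : (0 : ℝ) < 2 ^ i := by positivity
  have hz : ∀ j : ℕ, (2 : ℝ) ^ ((i : ℤ) - (j : ℤ) - 1) = 2 ^ i / (2 * 2 ^ j) := by
    intro j
    rw [zpow_sub₀ (by norm_num), zpow_sub₀ (by norm_num)]
    simp only [zpow_natCast, zpow_one]
    field_simp
  have hfirst : (t i : ℝ) / ((2 : ℝ) ^ ((i : ℤ) - 2) * x) < 8 / 2 ^ i := by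
    rw [zpow_sub₀ (by norm_num), zpow_natCast,
      div_lt_div_iff₀ (by positivity) hP0]
    have : (8 : ℝ) * (2 ^ i / 2 ^ (2 : ℤ) * x) = 2 * x * 2 ^ i := by
      norm_num
      ring
    rw [this]
    exact mul_lt_mul_of_pos_right htx hP0
  have hterm : ∀ j ∈ Finset.Icc 1 i,
      (t i : ℝ) / ((2 : ℝ) ^ ((i : ℤ) - (j : ℤ) - 1) * (t j : ℝ)) ≤ 2 / 2 ^ i * 2 ^ j := by
    intro j hj
    rw [Finset.mem_Icc] at hj
    have h0 := hpos j hj.1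
    have h1 : (t i : ℝ) ≤ t j := by exact_mod_cast hmono j hj.1 hj.2
    rw [hz, div_le_iff₀ (by positivity)]
    have : (2 : ℝ) / 2 ^ i * 2 ^ j * (2 ^ i / (2 * 2 ^ j) * (t j : ℝ)) = t j := by
      field_simp
    rw [this]
    exact h1
  have hlt : (t i : ℝ) / ((2 : ℝ) ^ ((i : ℤ) - ((i + 1 : ℕ) : ℤ) - 1) * (t (i + 1) : ℝ)) ≤ 8 := by
    have h0 := hpos (i + 1) (by omega)
    rw [hz, div_le_iff₀ (by positivity)]
    have : (8 : ℝ) * (2 ^ i / (2 * 2 ^ (i + 1)) * (t (i + 1) : ℝ)) = 2 * t (i + 1) := by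
      rw [pow_succ]
      field_simp
      norm_num
    rw [this]
    exact hlast
  have hsum := Finset.sum_le_sum hterm
  rw [← Finset.mul_sum, bs_geom] at hsum
  rw [Finset.sum_Icc_succ_top (by omega)]
  have e : (2 : ℝ) / 2 ^ i * (2 * 2 ^ i - 2) = 4 - 4 / 2 ^ i := by
    field_simp
    ring
  have h4 : (4 : ℝ) / 2 ^ i ≤ 2 := by
    rw [div_le_iff₀ hP0]; linarith
  have h8 : (8 : ℝ) / 2 ^ i = 2 * (4 / 2 ^ i) := by ring
  linarith
end

section
/- Let x ≥ 2 and i ≥ 1 be integers such that (i + 1 : ℝ) ≤ log₂ x − log₂ log₂ e, and for each integer j ≥ 1 set t_j = ⌈x/2^j⌉ + j + 1 (with ⌈·⌉ ceiling division). Set t = (5/14)·t_i as a real number. Then 2·(1 − t/x) + Σ_{j=1}^{i+1} 2^j·(1 − t/t_j) ≥ 3·2^(i−1). -/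
open Real Finset

/-- Let `x ≥ 2` and `i ≥ 1` be integers with `(i+1 : ℝ) ≤ log₂ x − log₂ log₂ e`, let
`t j = ⌈x/2^j⌉ + j + 1` for `j ≥ 1`, and set `t = (5/14)·t i`.  Then
`2·(1 − t/x) + Σ_{j=1}^{i+1} 2^j·(1 − t/t j) ≥ 3·2^(i−1)`. -/
theorem binary_time_resource_lower_bound (x i : ℕ) (hx : 2 ≤ x) (hi : 1 ≤ i)
    (hik : ((i : ℝ) + 1) ≤ logb 2 x - logb 2 (logb 2 (exp 1)))
    (tf : ℕ → ℕ) (htf : ∀ j, 1 ≤ j → tf j = ⌈(x : ℝ) / 2 ^ j⌉₊ + j + 1)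
    (t : ℝ) (ht : t = (5 / 14) * (tf i : ℝ)) :
    2 * (1 - t / (x : ℝ)) +
      ∑ j ∈ Finset.Icc 1 (i + 1), (2 : ℝ) ^ j * (1 - t / (tf j : ℝ)) ≥
      3 * (2 : ℝ) ^ ((i : ℤ) - 1) := by
  have hx0 : (0 : ℝ) < x := by
    have : 0 < x := by omega
    exact_mod_cast this
  -- the hypothesis gives `2^(i+1) ≤ x`
  have hpow : (2 : ℝ) ^ (i + 1) ≤ x := by
    have h1 : (1 : ℝ) ≤ logb 2 (exp 1) := by
      rw [Real.le_logb_iff_rpow_le (by norm_num) (exp_pos 1), Real.rpow_one]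
      have := Real.add_one_le_exp (1 : ℝ)
      linarith
    have h2 : (0 : ℝ) ≤ logb 2 (logb 2 (exp 1)) := Real.logb_nonneg (by norm_num) h1
    have h3 : ((i + 1 : ℕ) : ℝ) ≤ logb 2 x := by push_cast; linarith
    rw [Real.le_logb_iff_rpow_le (by norm_num) hx0, Real.rpow_natCast] at h3
    exact h3
  have htpos : ∀ j, 1 ≤ j → (0 : ℝ) < tf j := by
    intro j hj
    have : 0 < tf j := by rw [htf j hj]; omega
    exact_mod_cast this
  -- one step of monotonicity
  have hstep : ∀ j, 1 ≤ j → j + 1 ≤ i → tf (j + 1) ≤ tf j := by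
    intro j hj hji
    rw [htf j hj, htf (j + 1) (by omega)]
    have hp : (2 : ℝ) ^ (j + 1) ≤ x :=
      (pow_le_pow_right₀ (by norm_num) (by omega)).trans hpow
    have h1 : (1 : ℝ) ≤ x / 2 ^ (j + 1) := by
      rw [le_div_iff₀ (by positivity)]; linarith
    have h2 : (x : ℝ) / 2 ^ j = x / 2 ^ (j + 1) + x / 2 ^ (j + 1) := by
      rw [pow_succ]; field_simp; norm_num
    have h3 : ⌈(x : ℝ) / 2 ^ (j + 1)⌉₊ + 1 ≤ ⌈(x : ℝ) / 2 ^ j⌉₊ := by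
      rw [← Nat.ceil_add_one (by positivity)]
      apply Nat.ceil_mono
      linarith
    omega
  have hmono : ∀ j, 1 ≤ j → ∀ k, j + k ≤ i → tf (j + k) ≤ tf j := by
    intro j hj k
    induction k with
    | zero => intro _; simp
    | succ k ih =>
      intro hk
      exact (hstep (j + k) (by omega) (by omega)).trans (ih (by omega))
  have hle : ∀ j, 1 ≤ j → j ≤ i → (tf i : ℝ) ≤ tf j := by
    intro j hj hji
    have := hmono j hj (i - j) (by omega)
    rw [Nat.add_sub_cancel' hji] at this
    exact_mod_cast this
  have hlast : (tf i : ℝ) ≤ 2 * tf (i + 1) := by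
    have h2 : (x : ℝ) / 2 ^ i = 2 * (x / 2 ^ (i + 1)) := by
      rw [pow_succ]; field_simp
    have h3 : ⌈(x : ℝ) / 2 ^ i⌉₊ ≤ 2 * ⌈(x : ℝ) / 2 ^ (i + 1)⌉₊ := by
      rw [Nat.ceil_le, h2]
      push_cast
      have := Nat.le_ceil ((x : ℝ) / 2 ^ (i + 1))
      linarith
    have : tf i ≤ 2 * tf (i + 1) := by
      rw [htf i hi, htf (i + 1) (by omega)]; omega
    exact_mod_cast this
  have hfirst : (tf i : ℝ) ≤ x / 2 + 3 := by
    have h1 := hle 1 le_rfl hi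
    have h2 : (tf 1 : ℝ) ≤ x / 2 + 3 := by
      rw [htf 1 le_rfl]
      have := Nat.ceil_lt_add_one (a := (x : ℝ) / 2 ^ 1) (by positivity)
      push_cast
      rw [pow_one] at this ⊢
      linarith
    linarith
  have hP : (2 : ℝ) ≤ 2 ^ i := by
    calc (2 : ℝ) = 2 ^ 1 := by norm_num
      _ ≤ 2 ^ i := pow_le_pow_right₀ (by norm_num) hi
  have hgeom : ∀ n : ℕ, ∑ j ∈ Finset.Icc 1 n, (2 : ℝ) ^ j = 2 * 2 ^ n - 2 := by
    intro n
    induction n with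
    | zero => simp
    | succ n ih => rw [Finset.sum_Icc_succ_top (by omega), ih, pow_succ]; ring
  have hsum : (2 * 2 ^ i - 2) * (9 / 14 : ℝ) ≤
      ∑ j ∈ Finset.Icc 1 i, (2 : ℝ) ^ j * (1 - t / (tf j : ℝ)) := by
    rw [← hgeom i, Finset.sum_mul]
    apply Finset.sum_le_sum
    intro j hj
    rw [Finset.mem_Icc] at hj
    apply mul_le_mul_of_nonneg_left _ (by positivity)
    have : t / (tf j : ℝ) ≤ 5 / 14 := by
      rw [div_le_iff₀ (htpos j hj.1), ht]
      linarith [hle j hj.1 hj.2]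
    linarith
  have hL : (2 : ℝ) ^ i * (4 / 7) ≤ (2 : ℝ) ^ (i + 1) * (1 - t / (tf (i + 1) : ℝ)) := by
    have : t / (tf (i + 1) : ℝ) ≤ 5 / 7 := by
      rw [div_le_iff₀ (htpos (i + 1) (by omega)), ht]
      linarith
    rw [pow_succ, mul_assoc]
    apply mul_le_mul_of_nonneg_left _ (by positivity)
    linarith
  have hF : t / (x : ℝ) ≤ 5 / 14 * 2 := by
    rw [div_le_iff₀ hx0, ht]
    rw [pow_succ] at hpow
    linarith
  rw [Finset.sum_Icc_succ_top (by omega), zpow_sub₀ (by norm_num), zpow_natCast, zpow_one]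
  linarith
end
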